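/- arXiv:1603.08074 — 3 statements merged into one kernel-verified Lean document; each statement's English description precedes it below -/
import Mathlib

section
/- Let a_0, a_1 be positive integers and a_2 = −(a_0 + a_1). Define W : ℂ \ {0, −1} → ℂ by W(z) = (−1)^{a_0+a_1} · z^{a_0} · (z+1)^{a_2}, where the power with negative integer exponent a_2 is a zpow in ℂ. Then W is holomorphic on ℂ \ {0, −1}, its derivative W′ vanishes exactly at the single point z = a_0 / a_1, the critical value is W(a_0/a_1) = a_0^{a_0} · a_1^{a_1} · a_2^{a_2} (zpow of the complex numbers a_0, a_1, a_2), and the second derivative satisfies W″(a_0/a_1) ≠ 0. -/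
/-!
In the chart `z ↦ [z : 1 : -z - 1]` of the line `x₀ + x₁ + x₂ = 0`, `W` is the Laurent monomial
`x₀ ^ a₀ * x₁ ^ a₁ * x₂ ^ a₂`, and `z = a₀ / a₁` is the point `[a₀ : a₁ : a₂]`; homogeneity of
degree `0` then gives the critical value. The derivative of `W` is a unit on `ℂ \ {0, -1}` times the
linear factor `a₁ * z - a₀`, so it has a single zero there and this zero is simple.
-/

section Field

variable {K : Type*} [Field K]

lemma neg_sub_one_ne_zero_iff {z : K} : -z - 1 ≠ 0 ↔ z ≠ -1 := by
  rw [sub_ne_zero, ne_eq, neg_eq_iff_eq_neg]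

lemma neg_div_sub_one_eq_div {x₀ x₁ x₂ : K} (hx : x₀ + x₁ + x₂ = 0) (hx₁ : x₁ ≠ 0) :
    -(x₀ / x₁) - 1 = x₂ / x₁ := by
  field_simp
  linear_combination -hx

/-- The Laurent monomial with exponents `(a₀, a₁, a₂)`. When `a₀ + a₁ + a₂ = 0` it has degree `0`,
so that it defines a function on the line `x₀ + x₁ + x₂ = 0` in the projective plane, away from the
coordinate lines: the circuit potential. -/
def circuitMonomial (a₀ a₁ a₂ : ℤ) (x₀ x₁ x₂ : K) : K :=
  x₀ ^ a₀ * x₁ ^ a₁ * x₂ ^ a₂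

/-- The circuit potential of the triple `(a₀, a₁, a₂)` in the affine chart
`z ↦ [z : 1 : -z - 1]` of the line `x₀ + x₁ + x₂ = 0`. -/
def circuitPotential (a₀ a₁ a₂ : ℤ) (z : K) : K :=
  circuitMonomial a₀ a₁ a₂ z 1 (-z - 1)

variable {a₀ a₁ a₂ : ℤ}

lemma circuitMonomial_mul_mul_mul (ha : a₀ + a₁ + a₂ = 0) {t : K} (ht : t ≠ 0) (x₀ x₁ x₂ : K) :
    circuitMonomial a₀ a₁ a₂ (t * x₀) (t * x₁) (t * x₂) = circuitMonomial a₀ a₁ a₂ x₀ x₁ x₂ := by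
  have ht_zpow : t ^ a₀ * t ^ a₁ * t ^ a₂ = 1 := by
    rw [← zpow_add₀ ht, ← zpow_add₀ ht, ha, zpow_zero]
  calc (t * x₀) ^ a₀ * (t * x₁) ^ a₁ * (t * x₂) ^ a₂
      = (t ^ a₀ * t ^ a₁ * t ^ a₂) * (x₀ ^ a₀ * x₁ ^ a₁ * x₂ ^ a₂) := by
        simp only [mul_zpow]
        ring
    _ = x₀ ^ a₀ * x₁ ^ a₁ * x₂ ^ a₂ := by rw [ht_zpow, one_mul]

lemma circuitPotential_eq_zpow_mul_zpow (z : K) :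
    circuitPotential a₀ a₁ a₂ z = z ^ a₀ * (-z - 1) ^ a₂ := by
  rw [circuitPotential, circuitMonomial, one_zpow, mul_one]

lemma circuitPotential_eq_neg_one_zpow_mul (ha : a₀ + a₁ + a₂ = 0) (z : K) :
    circuitPotential a₀ a₁ a₂ z = (-1) ^ (a₀ + a₁) * z ^ a₀ * (z + 1) ^ a₂ := by
  have hsign : (-1 : K) ^ a₂ = (-1) ^ (a₀ + a₁) := by
    rw [eq_neg_of_add_eq_zero_right ha, ← inv_zpow', inv_neg_one]
  have hneg : -z - 1 = -1 * (z + 1) := by ring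
  rw [circuitPotential_eq_zpow_mul_zpow, hneg, mul_zpow, hsign]
  ring

lemma circuitPotential_div (ha : a₀ + a₁ + a₂ = 0) {x₀ x₁ x₂ : K} (hx : x₀ + x₁ + x₂ = 0)
    (hx₁ : x₁ ≠ 0) :
    circuitPotential a₀ a₁ a₂ (x₀ / x₁) = circuitMonomial a₀ a₁ a₂ x₀ x₁ x₂ := by
  rw [circuitPotential, neg_div_sub_one_eq_div hx hx₁, ← circuitMonomial_mul_mul_mul ha hx₁,
    mul_div_cancel₀ _ hx₁, mul_one, mul_div_cancel₀ _ hx₁]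

end Field

section Derivative

variable {𝕜 : Type*} [NontriviallyNormedField 𝕜]

lemma hasDerivAt_mul_of_eq_zero {𝔸 : Type*} [NormedRing 𝔸] [NormedAlgebra 𝕜 𝔸] {f g : 𝕜 → 𝔸}
    {g' : 𝔸} {x : 𝕜} (hf : ContinuousAt f x) (hg : HasDerivAt g g' x) (hgx : g x = 0) :
    HasDerivAt (fun z ↦ f z * g z) (f x * g') x := by
  have hslope : slope (fun z ↦ f z * g z) x = fun z ↦ f z * slope g x z := by
    funext z
    simp only [slope_def_module, hgx, mul_zero, sub_zero, mul_smul_comm]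
  rw [hasDerivAt_iff_tendsto_slope, hslope]
  exact (hf.tendsto.mono_left nhdsWithin_le_nhds).mul (hasDerivAt_iff_tendsto_slope.1 hg)

lemma hasDerivAt_neg_sub_one_zpow (n : ℤ) {z : 𝕜} (hz : z ≠ -1) :
    HasDerivAt (fun w : 𝕜 ↦ (-w - 1) ^ n) (-(n * (-z - 1) ^ (n - 1))) z := by
  rw [← mul_neg_one]
  exact (hasDerivAt_zpow n (-z - 1) (.inl (neg_sub_one_ne_zero_iff.2 hz))).comp z
    ((hasDerivAt_neg' z).sub_const 1)

variable {a₀ a₁ a₂ : ℤ} {z : 𝕜}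

lemma hasDerivAt_circuitPotential (ha : a₀ + a₁ + a₂ = 0) (hz₀ : z ≠ 0) (hz₁ : z ≠ -1) :
    HasDerivAt (circuitPotential a₀ a₁ a₂)
      (z ^ (a₀ - 1) * (-z - 1) ^ (a₂ - 1) * (a₁ * z - a₀)) z := by
  have hz₂ : -z - 1 ≠ 0 := neg_sub_one_ne_zero_iff.2 hz₁
  have ha₁ : (a₁ : 𝕜) = -(a₀ + a₂) := mod_cast congrArg (Int.cast : ℤ → 𝕜) (by lia)
  have hpow₀ : z ^ a₀ = z ^ (a₀ - 1) * z := by rw [← zpow_add_one₀ hz₀, sub_add_cancel]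
  have hpow₂ : (-z - 1) ^ a₂ = (-z - 1) ^ (a₂ - 1) * (-z - 1) := by
    rw [← zpow_add_one₀ hz₂, sub_add_cancel]
  rw [funext circuitPotential_eq_zpow_mul_zpow]
  refine ((hasDerivAt_zpow a₀ z (.inl hz₀)).mul (hasDerivAt_neg_sub_one_zpow a₂ hz₁)).congr_deriv ?_
  rw [hpow₀, hpow₂, ha₁]
  ring

lemma deriv_circuitPotential_eq_zero_iff (ha : a₀ + a₁ + a₂ = 0) (h₁ : (a₁ : 𝕜) ≠ 0)
    (hz₀ : z ≠ 0) (hz₁ : z ≠ -1) :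
    deriv (circuitPotential a₀ a₁ a₂) z = 0 ↔ z = a₀ / a₁ := by
  have hunit : z ^ (a₀ - 1) * (-z - 1) ^ (a₂ - 1) ≠ 0 :=
    mul_ne_zero (zpow_ne_zero _ hz₀) (zpow_ne_zero _ (neg_sub_one_ne_zero_iff.2 hz₁))
  rw [(hasDerivAt_circuitPotential ha hz₀ hz₁).deriv, mul_eq_zero_iff_left hunit, sub_eq_zero,
    eq_div_iff h₁, mul_comm]

lemma hasDerivAt_deriv_circuitPotential_div (ha : a₀ + a₁ + a₂ = 0) (h₀ : (a₀ : 𝕜) ≠ 0)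
    (h₁ : (a₁ : 𝕜) ≠ 0) (h₂ : (a₂ : 𝕜) ≠ 0) :
    HasDerivAt (deriv (circuitPotential a₀ a₁ a₂))
      ((a₀ / a₁ : 𝕜) ^ (a₀ - 1) * (a₂ / a₁ : 𝕜) ^ (a₂ - 1) * a₁) (a₀ / a₁ : 𝕜) := by
  have ha' : (a₀ + a₁ + a₂ : 𝕜) = 0 := mod_cast congrArg (Int.cast : ℤ → 𝕜) ha
  have hx₂ : -(a₀ / a₁ : 𝕜) - 1 = a₂ / a₁ := neg_div_sub_one_eq_div ha' h₁
  have hp₀ : (a₀ / a₁ : 𝕜) ≠ 0 := div_ne_zero h₀ h₁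
  have hp₁ : (a₀ / a₁ : 𝕜) ≠ -1 := neg_sub_one_ne_zero_iff.1 (hx₂ ▸ div_ne_zero h₂ h₁)
  have hunit : ContinuousAt (fun z : 𝕜 ↦ z ^ (a₀ - 1) * (-z - 1) ^ (a₂ - 1)) (a₀ / a₁) :=
    (continuousAt_zpow₀ _ _ (.inl hp₀)).mul (hasDerivAt_neg_sub_one_zpow _ hp₁).continuousAt
  have hlinear : HasDerivAt (fun z : 𝕜 ↦ a₁ * z - a₀) a₁ (a₀ / a₁) := by
    simpa only [mul_one] using ((hasDerivAt_id' _).const_mul (a₁ : 𝕜)).sub_const (a₀ : 𝕜)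
  have hroot : (a₁ * (a₀ / a₁) - a₀ : 𝕜) = 0 := sub_eq_zero.2 (mul_div_cancel₀ _ h₁)
  rw [← hx₂]
  refine (hasDerivAt_mul_of_eq_zero hunit hlinear hroot).congr_of_eventuallyEq ?_
  filter_upwards [isOpen_ne.mem_nhds hp₀, isOpen_ne.mem_nhds hp₁] with z hz₀ hz₁
  exact (hasDerivAt_circuitPotential ha hz₀ hz₁).deriv

end Derivative

theorem statement2_general {𝕜 : Type*} [NontriviallyNormedField 𝕜] {a₀ a₁ a₂ : ℤ}
    (ha : a₀ + a₁ + a₂ = 0) (h₀ : (a₀ : 𝕜) ≠ 0) (h₁ : (a₁ : 𝕜) ≠ 0) (h₂ : (a₂ : 𝕜) ≠ 0)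
    {W : 𝕜 → 𝕜} (hW : W = fun z ↦ (-1) ^ (a₀ + a₁) * z ^ a₀ * (z + 1) ^ a₂) :
    (∀ z, z ≠ 0 → z ≠ -1 → DifferentiableAt 𝕜 W z) ∧
    (∀ z, z ≠ 0 → z ≠ -1 → (deriv W z = 0 ↔ z = a₀ / a₁)) ∧
    W (a₀ / a₁) = (a₀ : 𝕜) ^ a₀ * (a₁ : 𝕜) ^ a₁ * (a₂ : 𝕜) ^ a₂ ∧
    deriv (deriv W) (a₀ / a₁) ≠ 0 := by
  have ha' : (a₀ + a₁ + a₂ : 𝕜) = 0 := mod_cast congrArg (Int.cast : ℤ → 𝕜) ha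
  rw [← funext (circuitPotential_eq_neg_one_zpow_mul ha)] at hW
  subst hW
  refine ⟨fun z hz₀ hz₁ ↦ (hasDerivAt_circuitPotential ha hz₀ hz₁).differentiableAt,
    fun z hz₀ hz₁ ↦ deriv_circuitPotential_eq_zero_iff ha h₁ hz₀ hz₁,
    circuitPotential_div ha ha' h₁, ?_⟩
  rw [(hasDerivAt_deriv_circuitPotential_div ha h₀ h₁ h₂).deriv]
  exact mul_ne_zero (mul_ne_zero (zpow_ne_zero _ (div_ne_zero h₀ h₁))
    (zpow_ne_zero _ (div_ne_zero h₂ h₁))) h₁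

/-- For positive integers `a₀, a₁` and `a₂ = -(a₀+a₁)`, the
one-dimensional circuit potential `W z = (-1)^(a₀+a₁) * z^a₀ * (z+1)^a₂` (zpow)
is holomorphic on `ℂ \ {0, -1}`, its derivative vanishes exactly at `z = a₀/a₁`,
the critical value is `W (a₀/a₁) = a₀^a₀ * a₁^a₁ * a₂^a₂` (zpow of complex numbers),
and `W'' (a₀/a₁) ≠ 0`. -/
theorem statement2 (a₀ a₁ : ℤ) (h₀ : 0 < a₀) (h₁ : 0 < a₁) (a₂ : ℤ) (ha₂ : a₂ = -(a₀ + a₁))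
    (W : ℂ → ℂ)
    (hW : W = fun z : ℂ => (-1 : ℂ) ^ (a₀ + a₁) * z ^ a₀ * (z + 1) ^ a₂) :
    (∀ z : ℂ, z ≠ 0 → z ≠ -1 → DifferentiableAt ℂ W z) ∧
    (∀ z : ℂ, z ≠ 0 → z ≠ -1 → (deriv W z = 0 ↔ z = (a₀ : ℂ) / (a₁ : ℂ))) ∧
    W ((a₀ : ℂ) / (a₁ : ℂ)) = (a₀ : ℂ) ^ a₀ * (a₁ : ℂ) ^ a₁ * (a₂ : ℂ) ^ a₂ ∧
    deriv (deriv W) ((a₀ : ℂ) / (a₁ : ℂ)) ≠ 0 := by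
  exact statement2_general (by lia) (mod_cast h₀.ne') (mod_cast h₁.ne')
    (Int.cast_ne_zero.2 (by lia)) hW
end

section
/- Let d ≥ 0 and let a_0, …, a_d be positive integers with n = a_0 + ⋯ + a_d. Let G = {z ∈ (ℂ*)^{d+1} : ∏_{i=0}^{d} z_i^{a_i} = 1} and w(z) = z_0 + ⋯ + z_d. Call z ∈ G a critical point of w restricted to G if the linear functional v ↦ ∑_{i=0}^{d} v_i vanishes on the tangent space {v ∈ ℂ^{d+1} : ∑_{i=0}^{d} a_i v_i / z_i = 0} of G at z. Then z ∈ G is a critical point of w restricted to G if and only if there exists t ∈ ℂ with t^n = ∏_{i=0}^{d} a_i^{−a_i} (zpow in ℂ) and z_i = a_i · t for all 0 ≤ i ≤ d. Consequently, the set of critical points of w restricted to G has exactly n elements. -/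
/-!
By Lagrange multipliers, `z` is critical iff the functional `v ↦ ∑ vᵢ` is a multiple `t` of the
functional `v ↦ ∑ aᵢ vᵢ / zᵢ` cutting out the tangent space, that is, iff `zᵢ = aᵢ t` for all `i`.
Substituting into `∏ zᵢ ^ aᵢ = 1` leaves the equation `t ^ n = ∏ aᵢ ^ (-aᵢ)`, which has `n` simple
roots, and `t ↦ (aᵢ t)ᵢ` is injective.
-/

section Field

variable {K : Type*} [Field K]

theorem ker_le_ker_iff_exists_smul_eq {V : Type*} [AddCommGroup V] [Module K V]
    (f g : Module.Dual K V) : LinearMap.ker f ≤ LinearMap.ker g ↔ ∃ t : K, t • f = g := by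
  constructor
  · intro h
    have hg : g ∈ Submodule.span K (Set.range fun _ : Unit => f) :=
      mem_span_of_iInf_ker_le_ker (by simpa only [ciInf_const] using h)
    rwa [Set.range_const, Submodule.mem_span_singleton] at hg
  · rintro ⟨t, rfl⟩
    exact LinearMap.ker_le_ker_smul f t

theorem encard_setOf_pow_eq [IsSepClosed K] {n : ℕ} (hn : (n : K) ≠ 0) {c : K} (hc : c ≠ 0) :
    {t : K | t ^ n = c}.encard = n := by
  have hsep := Polynomial.separable_X_pow_sub_C c hn hc
  have hroots : {t : K | t ^ n = c} = (Polynomial.X ^ n - Polynomial.C c).rootSet K := by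
    ext t
    simp [Polynomial.mem_rootSet, hsep.ne_zero, sub_eq_zero]
  rw [hroots, Set.encard_eq_coe_toFinset_card, Set.toFinset_card,
    Polynomial.card_rootSet_eq_natDegree hsep (IsSepClosed.splits_domain _ hsep),
    Polynomial.natDegree_X_pow_sub_C]

theorem encard_setOf_zpow_eq [IsSepClosed K] {n : ℤ} (hn : (n : K) ≠ 0) {c : K} (hc : c ≠ 0) :
    {t : K | t ^ n = c}.encard = n.natAbs := by
  obtain ⟨m, rfl | rfl⟩ := n.eq_nat_or_neg
  · simpa using encard_setOf_pow_eq (n := m) (by simpa using hn) hc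
  · simpa [inv_eq_iff_eq_inv] using
      encard_setOf_pow_eq (n := m) (by simpa using hn) (inv_ne_zero hc)

end Field

theorem prod_zpow_eq_zpow_sum₀ {ι G : Type*} [CommGroupWithZero G] (s : Finset ι) (a : ι → ℤ)
    {t : G} (ht : t ≠ 0) : ∏ i ∈ s, t ^ a i = t ^ ∑ i ∈ s, a i := by
  induction s using Finset.cons_induction with
  | empty => simp
  | cons i s hi ih => rw [Finset.prod_cons, Finset.sum_cons, zpow_add₀ ht, ih]

theorem prod_mul_zpow_eq_one_iff {ι G : Type*} [CommGroupWithZero G] (s : Finset ι) (a : ι → ℤ)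
    {b : ι → G} (hb : ∀ i ∈ s, b i ≠ 0) {t : G} (ht : t ≠ 0) :
    ∏ i ∈ s, (b i * t) ^ a i = 1 ↔ t ^ ∑ i ∈ s, a i = ∏ i ∈ s, b i ^ (-a i) := by
  have hprod : ∏ i ∈ s, b i ^ a i ≠ 0 :=
    Finset.prod_ne_zero_iff.mpr fun i hi => zpow_ne_zero _ (hb i hi)
  simp only [mul_zpow, Finset.prod_mul_distrib, prod_zpow_eq_zpow_sum₀ s a ht, zpow_neg,
    Finset.prod_inv_distrib]
  exact (mul_eq_one_iff_inv_eq₀ hprod).trans eq_comm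

section MirrorPotential

variable {ι K : Type*} [Fintype ι] [Field K]

/-- The domain of the mirror potential of the weighted projective space with weights `a`: the
subgroup `∏ zᵢ ^ aᵢ = 1` of the torus `(Kˣ)^ι`, encoded as a set of vectors over `K`. -/
def mirrorTorus (K : Type*) [Field K] (a : ι → ℤ) : Set (ι → K) :=
  {z | (∀ i, z i ≠ 0) ∧ ∏ i, z i ^ a i = 1}

/-- Criticality at `z` of the mirror potential `∑ zᵢ` restricted to `mirrorTorus K a`: its
differential vanishes on the tangent space `∑ aᵢ vᵢ / zᵢ = 0`, the kernel of the logarithmic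
differential of `∏ zᵢ ^ aᵢ`. -/
def IsMirrorCriticalPoint (a : ι → ℤ) (z : ι → K) : Prop :=
  ∀ v : ι → K, ∑ i, (a i : K) * v i / z i = 0 → ∑ i, v i = 0

theorem isMirrorCriticalPoint_iff_exists_eq_mul (a : ι → ℤ) {z : ι → K} (hz : ∀ i, z i ≠ 0) :
    IsMirrorCriticalPoint a z ↔ ∃ t : K, ∀ i, z i = a i * t := by
  classical
  have hker : IsMirrorCriticalPoint a z ↔
      LinearMap.ker (Fintype.linearCombination K fun i => (a i : K) / z i) ≤
        LinearMap.ker (Fintype.linearCombination K fun _ : ι => (1 : K)) := by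
    simp only [IsMirrorCriticalPoint, SetLike.le_def, LinearMap.mem_ker,
      Fintype.linearCombination_apply, smul_eq_mul, mul_one, mul_div_left_comm, mul_div_assoc]
  rw [hker, ker_le_ker_iff_exists_smul_eq]
  refine exists_congr fun t => ?_
  simp only [LinearMap.pi_ext'_iff, LinearMap.ext_ring_iff, LinearMap.comp_apply,
    LinearMap.smul_apply, LinearMap.single_apply, Fintype.linearCombination_apply_single,
    smul_eq_mul, one_mul]
  refine forall_congr' fun i => ?_
  rw [← mul_div_assoc, div_eq_one_iff_eq (hz i), mul_comm, eq_comm]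

theorem isMirrorCriticalPoint_iff_exists_zpow_eq {a : ι → ℤ} {z : ι → K}
    (hz : z ∈ mirrorTorus K a) :
    IsMirrorCriticalPoint a z ↔
      ∃ t : K, t ^ ∑ i, a i = ∏ i, (a i : K) ^ (-a i) ∧ ∀ i, z i = a i * t := by
  obtain ⟨hz, hprod⟩ := hz
  rw [isMirrorCriticalPoint_iff_exists_eq_mul a hz]
  refine exists_congr fun t => ⟨fun h => ⟨?_, h⟩, And.right⟩
  obtain rfl : z = fun i => (a i : K) * t := funext h
  cases isEmpty_or_nonempty ι
  · simp
  have ht : t ≠ 0 := right_ne_zero_of_mul (hz (Classical.arbitrary ι))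
  exact (prod_mul_zpow_eq_one_iff _ a (fun i _ => left_ne_zero_of_mul (hz i)) ht).mp hprod

theorem setOf_isMirrorCriticalPoint_eq_image {a : ι → ℤ} (ha : ∀ i, (a i : K) ≠ 0)
    (hsum : ∑ i, a i ≠ 0) :
    {z ∈ mirrorTorus K a | IsMirrorCriticalPoint a z} =
      (fun (t : K) i => (a i : K) * t) '' {t | t ^ ∑ i, a i = ∏ i, (a i : K) ^ (-a i)} := by
  ext z
  constructor
  · rintro ⟨hz, hcrit⟩
    obtain ⟨t, ht, hzt⟩ := (isMirrorCriticalPoint_iff_exists_zpow_eq hz).mp hcrit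
    exact ⟨t, ht, funext fun i => (hzt i).symm⟩
  · rintro ⟨t, ht, rfl⟩
    have ht₀ : t ≠ 0 := by
      rintro rfl
      rw [Set.mem_ofPred_eq, zero_zpow _ hsum] at ht
      exact Finset.prod_ne_zero_iff.mpr (fun i _ => zpow_ne_zero _ (ha i)) ht.symm
    have hz : (fun i => (a i : K) * t) ∈ mirrorTorus K a :=
      ⟨fun i => mul_ne_zero (ha i) ht₀, (prod_mul_zpow_eq_one_iff _ a (fun i _ => ha i) ht₀).mpr ht⟩
    exact ⟨hz, (isMirrorCriticalPoint_iff_exists_zpow_eq hz).mpr ⟨t, ht, fun _ => rfl⟩⟩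

theorem encard_setOf_isMirrorCriticalPoint [IsSepClosed K] {a : ι → ℤ} (ha : ∀ i, (a i : K) ≠ 0)
    (hsum : ((∑ i, a i : ℤ) : K) ≠ 0) :
    {z ∈ mirrorTorus K a | IsMirrorCriticalPoint a z}.encard = (∑ i, a i).natAbs := by
  have hsum' : ∑ i, a i ≠ 0 := fun h => hsum (by rw [h, Int.cast_zero])
  obtain ⟨j, -, -⟩ := Finset.exists_ne_zero_of_sum_ne_zero hsum'
  have hinj : Function.Injective fun (t : K) i => (a i : K) * t :=
    fun s t h => mul_left_cancel₀ (ha j) (congrFun h j)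
  rw [setOf_isMirrorCriticalPoint_eq_image ha hsum', hinj.encard_image, encard_setOf_zpow_eq hsum]
  exact Finset.prod_ne_zero_iff.mpr fun i _ => zpow_ne_zero _ (ha i)

theorem statement4_general [IsSepClosed K] (a : ι → ℤ) (ha : ∀ i, (a i : K) ≠ 0)
    (n : ℤ) (hn : n = ∑ i, a i) (hn₀ : (n : K) ≠ 0) :
    (∀ z ∈ mirrorTorus K a, IsMirrorCriticalPoint a z ↔
      ∃ t : K, t ^ n = ∏ i, (a i : K) ^ (-a i) ∧ ∀ i, z i = a i * t) ∧
    {z ∈ mirrorTorus K a | IsMirrorCriticalPoint a z}.Finite ∧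
    {z ∈ mirrorTorus K a | IsMirrorCriticalPoint a z}.ncard = n.natAbs := by
  subst hn
  have hcard := encard_setOf_isMirrorCriticalPoint ha hn₀
  exact ⟨fun z hz => isMirrorCriticalPoint_iff_exists_zpow_eq hz,
    Set.finite_of_encard_eq_coe hcard, by rw [Set.ncard, hcard, ENat.toNat_natCast]⟩

end MirrorPotential

/-- For positive integers `a₀, …, a_d` with `n = ∑ aᵢ`, a point `z` of the
subtorus `G = {z ∈ (ℂ*)^{d+1} : ∏ zᵢ^{aᵢ} = 1}` is a critical point of the mirror potential
`w(z) = ∑ zᵢ` restricted to `G` (i.e. `v ↦ ∑ vᵢ` vanishes on the tangent space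
`{v : ∑ aᵢ vᵢ / zᵢ = 0}`) iff there is `t ∈ ℂ` with `t^n = ∏ aᵢ^{-aᵢ}` (zpow) and
`zᵢ = aᵢ t` for all `i`.  Consequently the set of critical points has exactly `n` elements. -/
theorem statement4 (d : ℕ) (a : Fin (d + 1) → ℕ) (hpos : ∀ i, 0 < a i)
    (n : ℕ) (hn : n = ∑ i, a i) :
    (∀ z : Fin (d + 1) → ℂ, (∀ i, z i ≠ 0) → ∏ i, z i ^ (a i : ℤ) = 1 →
      ((∀ v : Fin (d + 1) → ℂ, ∑ i, (a i : ℂ) * v i / z i = 0 → ∑ i, v i = 0) ↔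
        ∃ t : ℂ, t ^ n = ∏ i, (a i : ℂ) ^ (-(a i : ℤ)) ∧ ∀ i, z i = (a i : ℂ) * t)) ∧
    ({z : Fin (d + 1) → ℂ | ((∀ i, z i ≠ 0) ∧ ∏ i, z i ^ (a i : ℤ) = 1) ∧
        ∀ v : Fin (d + 1) → ℂ, ∑ i, (a i : ℂ) * v i / z i = 0 → ∑ i, v i = 0}.Finite ∧
      {z : Fin (d + 1) → ℂ | ((∀ i, z i ≠ 0) ∧ ∏ i, z i ^ (a i : ℤ) = 1) ∧
        ∀ v : Fin (d + 1) → ℂ, ∑ i, (a i : ℂ) * v i / z i = 0 → ∑ i, v i = 0}.ncard = n) := by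
  have hn₀ : n ≠ 0 := hn ▸ (Finset.sum_pos (fun i _ => hpos i) Finset.univ_nonempty).ne'
  simpa [mirrorTorus, IsMirrorCriticalPoint] using
    statement4_general (K := ℂ) (fun i => (a i : ℤ)) (fun i => by simpa using (hpos i).ne')
      n (by simp [hn]) (by simpa using hn₀)
end

section
/- Let d ≥ 2 and let a = (a_0, …, a_{d+1}) ∈ ℤ^{d+2} be balanced nonzero. Define G : U → ℂ² by G(z) = (W(z), z_0/z_1). Then for z ∈ U, the restriction of the complex Fréchet derivative DG(z) to the subspace T, as a linear map T → ℂ², has rank at most 1 if and only if z_i = a_i / a_{d+1} for every i with 2 ≤ i ≤ d. (In particular the critical locus of the pair (W, z_0/z_1) on U is the one-parameter family where the last d−1 coordinates are fixed at a_i/a_{d+1} and z_0 + z_1 = (a_0+a_1)/a_{d+1}.) -/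
/-!
On the torus `d(z^a) = z^a · ∑ (aᵢ / zᵢ) dzᵢ`, and `z_p / z_q` is itself the Laurent monomial of
exponent `e_p - e_q`. Hence the rank drops exactly when the two logarithmic differentials are
proportional on the hyperplane `∑ vᵢ = 0`. The functionals vanishing there are the constant
multiples of `∑ dzᵢ`, so this is the Lagrange multiplier equation `a = μ z + c (e_p - e_q)`.
Summing the coordinates gives `∑ aᵢ = μ ∑ zᵢ`, which determines `μ`.
-/

section LinearAlgebra

/-- The hyperplane of vectors with coordinate sum zero, the common direction of the affine
hyperplanes `∑ zᵢ = const`. -/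
def sumZeroHyperplane (R ι : Type*) [CommRing R] [Fintype ι] : Submodule R (ι → R) :=
  LinearMap.ker (∑ i, LinearMap.proj i)

lemma mem_sumZeroHyperplane {R ι : Type*} [CommRing R] [Fintype ι] {v : ι → R} :
    v ∈ sumZeroHyperplane R ι ↔ ∑ i, v i = 0 := by
  simp [sumZeroHyperplane]

lemma forall_sumZeroHyperplane_sum_mul_eq_zero_iff {R ι : Type*} [CommRing R] [Fintype ι]
    {c : ι → R} :
    (∀ v ∈ sumZeroHyperplane R ι, ∑ i, c i * v i = 0) ↔ ∃ μ, ∀ i, c i = μ := by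
  classical
  constructor
  · intro h
    obtain _ | ⟨⟨j⟩⟩ := isEmpty_or_nonempty ι
    · exact ⟨0, isEmptyElim⟩
    · refine ⟨c j, fun i => ?_⟩
      have hij := h (Pi.single i 1 - Pi.single j 1) (by simp [mem_sumZeroHyperplane])
      simpa [mul_sub, Pi.single_apply, sub_eq_zero] using hij
  · rintro ⟨μ, hμ⟩ v hv
    simp only [hμ, ← Finset.mul_sum, mem_sumZeroHyperplane.1 hv, mul_zero]

variable {K ι : Type*} [Field K]

lemma rank_map_prod_le_one_iff {V E : Type*} [AddCommGroup V] [Module K V] [AddCommGroup E]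
    [Module K E] (S : Submodule K V) (f : V →ₗ[K] E) {g : V →ₗ[K] K}
    (hg : ∃ v ∈ S, g v ≠ 0) :
    Module.rank K (S.map (f.prod g)) ≤ 1 ↔ ∃ c : E, ∀ v ∈ S, f v = g v • c := by
  rw [rank_submodule_le_one_iff']
  simp only [Submodule.map_le_iff_le_comap]
  constructor
  · rintro ⟨⟨x, y⟩, h⟩
    obtain ⟨u, huS, hu⟩ := hg
    have hy : y ≠ 0 := by
      rintro rfl
      obtain ⟨t, ht⟩ := Submodule.mem_span_singleton.1 (h huS)
      exact hu (by simpa using (congrArg Prod.snd ht).symm)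
    refine ⟨y⁻¹ • x, fun v hv => ?_⟩
    obtain ⟨t, ht⟩ := Submodule.mem_span_singleton.1 (h hv)
    obtain ⟨hfv, hgv⟩ := Prod.ext_iff.1 ht
    simp only [Prod.smul_mk, smul_eq_mul] at hfv hgv
    calc f v = t • x := hfv.symm
      _ = (t * y) • y⁻¹ • x := by rw [smul_smul, mul_inv_cancel_right₀ hy]
      _ = g v • y⁻¹ • x := by rw [hgv]; rfl
  · rintro ⟨c, hc⟩
    exact ⟨(c, 1), fun v hv => Submodule.mem_span_singleton.2 ⟨g v, by simp [hc v hv]⟩⟩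

variable [Fintype ι] [DecidableEq ι] {p q : ι}

lemma eq_smul_single_sub_single {y : ι → K} (hpq : p ≠ q) (hsum : ∑ i, y i = 0)
    (hy : ∀ i, i ≠ p → i ≠ q → y i = 0) :
    y = y p • (Pi.single p 1 - Pi.single q 1) := by
  have hadd : y p + y q = 0 := by
    rw [← Fintype.sum_eq_add p q hpq fun i hi => hy i hi.1 hi.2, hsum]
  ext i
  by_cases hip : i = p
  · simp [hip, hpq]
  by_cases hiq : i = q
  · simpa [hiq, hpq.symm] using eq_neg_of_add_eq_zero_right hadd
  · simp [hip, hiq, hy i hip hiq]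

lemma exists_eq_smul_add_smul_single_sub_single_iff {x z : ι → K} (hpq : p ≠ q)
    (hz : ∑ i, z i ≠ 0) :
    (∃ c μ : K, x = μ • z + c • (Pi.single p 1 - Pi.single q 1)) ↔
      ∀ i, i ≠ p → i ≠ q → x i * ∑ j, z j = (∑ j, x j) * z i := by
  constructor
  · rintro ⟨c, μ, rfl⟩ i hip hiq
    have hsum : ∑ j, (μ • z + c • (Pi.single p 1 - Pi.single q 1) : ι → K) j = μ * ∑ j, z j := by
      simp [Finset.sum_add_distrib, ← Finset.mul_sum]
    have hi : (μ • z + c • (Pi.single p 1 - Pi.single q 1) : ι → K) i = μ * z i := by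
      simp [hip, hiq]
    rw [hsum, hi]
    ring
  · intro h
    set μ := (∑ j, x j) / ∑ j, z j with hμ
    refine ⟨(x - μ • z) p, μ, ?_⟩
    rw [← eq_smul_single_sub_single hpq, add_sub_cancel]
    · simp [← Finset.mul_sum, hμ, hz]
    · intro i hip hiq
      have hi : x i = μ * z i := by
        rw [hμ, div_mul_eq_mul_div, eq_div_iff hz, h i hip hiq]
      simp [hi]

lemma single_sub_single_ne_smul {z : ι → K} (hpq : p ≠ q) (hz : ∑ i, z i ≠ 0) (μ : K) :
    (Pi.single p 1 - Pi.single q 1 : ι → K) ≠ μ • z := by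
  intro h
  have hμ : μ = 0 := by
    have hsum : ∑ i, (Pi.single p 1 - Pi.single q 1 : ι → K) i = ∑ i, (μ • z) i := by rw [h]
    simpa [← Finset.mul_sum, hz] using hsum
  simpa [hμ, hpq] using congrFun h p

end LinearAlgebra

section LaurentMonomial

variable {𝕜 ι : Type*} [Fintype ι]

/-- The Laurent monomial `z^a`. -/
def laurentMonomial [Field 𝕜] (a : ι → ℤ) (z : ι → 𝕜) : 𝕜 :=
  ∏ i, z i ^ a i

lemma laurentMonomial_ne_zero [Field 𝕜] (a : ι → ℤ) {z : ι → 𝕜} (hz : ∀ i, z i ≠ 0) :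
    laurentMonomial a z ≠ 0 :=
  Finset.prod_ne_zero_iff.2 fun i _ => zpow_ne_zero _ (hz i)

lemma laurentMonomial_single_sub_single [Field 𝕜] [DecidableEq ι] {p q : ι} (hpq : p ≠ q)
    (z : ι → 𝕜) :
    laurentMonomial (Pi.single p 1 - Pi.single q 1) z = z p / z q := by
  rw [laurentMonomial, Fintype.prod_eq_mul p q hpq]
  · simp [hpq, hpq.symm, div_eq_mul_inv]
  · rintro i ⟨hip, hiq⟩
    simp [hip, hiq]

variable [NontriviallyNormedField 𝕜]

/-- The logarithmic differential `∑ (aᵢ / zᵢ) dzᵢ` of the Laurent monomial `z^a` at `z`. -/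
def logDifferential (a : ι → ℤ) (z : ι → 𝕜) : (ι → 𝕜) →L[𝕜] 𝕜 :=
  ∑ i, ((a i : 𝕜) / z i) • ContinuousLinearMap.proj i

lemma logDifferential_apply (a : ι → ℤ) (z v : ι → 𝕜) :
    logDifferential a z v = ∑ i, (a i : 𝕜) / z i * v i := by
  simp [logDifferential]

lemma hasFDerivAt_laurentMonomial (a : ι → ℤ) {z : ι → 𝕜} (hz : ∀ i, z i ≠ 0) :
    HasFDerivAt (laurentMonomial a) (laurentMonomial a z • logDifferential a z) z := by
  classical
  have hproj (i : ι) : HasFDerivAt (fun w : ι → 𝕜 => w i)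
      (ContinuousLinearMap.proj (R := 𝕜) (φ := fun _ => 𝕜) i) z :=
    hasFDerivAt_apply i z
  have hpow (i : ι) : HasFDerivAt (fun w : ι → 𝕜 => w i ^ a i)
      (((a i : 𝕜) * z i ^ (a i - 1)) • ContinuousLinearMap.proj (φ := fun _ => 𝕜) i) z :=
    (hasDerivAt_zpow (a i) (z i) (.inl (hz i))).comp_hasFDerivAt (h₂ := (· ^ a i)) z (hproj i)
  refine (HasFDerivAt.finsetProd (u := Finset.univ) fun i _ => hpow i).congr_fderiv ?_
  rw [logDifferential, Finset.smul_sum]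
  refine Finset.sum_congr rfl fun i hi => ?_
  rw [smul_smul, smul_smul, laurentMonomial, ← Finset.mul_prod_erase _ _ hi,
    zpow_sub_one₀ (hz i)]
  congr 1
  ring

lemma exists_logDifferential_eq_mul_iff (a b : ι → ℤ) {z : ι → 𝕜} (hz : ∀ i, z i ≠ 0) :
    (∃ c, ∀ v ∈ sumZeroHyperplane 𝕜 ι, logDifferential a z v = c * logDifferential b z v) ↔
      ∃ c μ : 𝕜, (fun i => (a i : 𝕜)) = μ • z + c • fun i => (b i : 𝕜) := by
  refine exists_congr fun c => ?_
  have hsub (v : ι → 𝕜) : logDifferential a z v - c * logDifferential b z v =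
      ∑ i, ((a i - c * b i) / z i) * v i := by
    simp only [logDifferential_apply, Finset.mul_sum, ← Finset.sum_sub_distrib]
    exact Finset.sum_congr rfl fun i _ => by ring
  simp only [← sub_eq_zero (b := c * _), hsub, forall_sumZeroHyperplane_sum_mul_eq_zero_iff,
    div_eq_iff (hz _), funext_iff, Pi.add_apply, Pi.smul_apply, smul_eq_mul, sub_eq_iff_eq_add]

lemma exists_logDifferential_ne_zero (b : ι → ℤ) {z : ι → 𝕜} (hz : ∀ i, z i ≠ 0)
    (hb : ∀ μ : 𝕜, (fun i => (b i : 𝕜)) ≠ μ • z) :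
    ∃ v ∈ sumZeroHyperplane 𝕜 ι, logDifferential b z v ≠ 0 := by
  by_contra! h
  simp only [logDifferential_apply] at h
  obtain ⟨μ, hμ⟩ := forall_sumZeroHyperplane_sum_mul_eq_zero_iff.1 h
  exact hb μ (funext fun i => (div_eq_iff (hz i)).1 (hμ i))

theorem rank_map_fderiv_laurentMonomial_prodMk_le_one_iff (a b : ι → ℤ) {z : ι → 𝕜}
    (hz : ∀ i, z i ≠ 0) (hb : ∀ μ : 𝕜, (fun i => (b i : 𝕜)) ≠ μ • z) :
    Module.rank 𝕜 ((sumZeroHyperplane 𝕜 ι).map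
        (fderiv 𝕜 (fun w => (laurentMonomial a w, laurentMonomial b w)) z).toLinearMap) ≤ 1 ↔
      ∃ c μ : 𝕜, (fun i => (a i : 𝕜)) = μ • z + c • fun i => (b i : 𝕜) := by
  have ha₀ := laurentMonomial_ne_zero a hz
  have hb₀ := laurentMonomial_ne_zero b hz
  obtain ⟨u, hu, hbu⟩ := exists_logDifferential_ne_zero b hz hb
  rw [((hasFDerivAt_laurentMonomial a hz).prodMk (hasFDerivAt_laurentMonomial b hz)).fderiv,
    ContinuousLinearMap.coe_prod,
    rank_map_prod_le_one_iff _ _ ⟨u, hu, by simp [hb₀, hbu]⟩,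
    ← exists_logDifferential_eq_mul_iff a b hz]
  have hscale : Function.Surjective (laurentMonomial a z / laurentMonomial b z * ·) :=
    mul_left_surjective₀ (div_ne_zero ha₀ hb₀)
  rw [hscale.exists]
  refine exists_congr fun c => forall₂_congr fun v _ => ?_
  simp only [ContinuousLinearMap.coe_coe, smul_apply, smul_eq_mul]
  field_simp

theorem statement10_general {p q : ι} (hpq : p ≠ q) (a : ι → ℤ) {z : ι → 𝕜}
    (hz : ∀ i, z i ≠ 0) (hsum : ∑ i, z i ≠ 0) :
    Module.rank 𝕜 ((sumZeroHyperplane 𝕜 ι).map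
        (fderiv 𝕜 (fun w : ι → 𝕜 => (∏ i, w i ^ a i, w p / w q)) z).toLinearMap) ≤ 1 ↔
      ∀ i, i ≠ p → i ≠ q → (a i : 𝕜) * ∑ j, z j = (∑ j, (a j : 𝕜)) * z i := by
  classical
  have hcast : (fun i => (((Pi.single p 1 - Pi.single q 1 : ι → ℤ) i : ℤ) : 𝕜)) =
      Pi.single p 1 - Pi.single q 1 := by
    ext i
    simp [Pi.single_apply]
  have hrank := rank_map_fderiv_laurentMonomial_prodMk_le_one_iff a
    (Pi.single p 1 - Pi.single q 1) hz (hcast ▸ single_sub_single_ne_smul hpq hsum)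
  rw [hcast, exists_eq_smul_add_smul_single_sub_single_iff hpq hsum,
    funext (laurentMonomial_single_sub_single hpq)] at hrank
  exact hrank

end LaurentMonomial

section Chart

variable {d : ℕ}

lemma two_le_val_iff_ne_zero_and_ne_one (i : Fin (d + 2)) :
    2 ≤ (i : ℕ) ↔ i ≠ 0 ∧ i ≠ 1 := by
  simp only [ne_eq, Fin.ext_iff, Fin.val_zero, Fin.val_one]
  omega

lemma mul_sum_eq_sum_mul_iff_eq_div_last {K : Type*} [Field K] {a : Fin (d + 2) → ℤ}
    (hbal : ∑ i, a i = 0) (hlast : (a (Fin.last (d + 1)) : K) ≠ 0) {z : Fin (d + 1) → K}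
    (hzs : ∑ i, z i = -1) (i : Fin (d + 1)) :
    (a i.castSucc : K) * ∑ j, z j = (∑ j : Fin (d + 1), (a j.castSucc : K)) * z i ↔
      z i = (a i.castSucc : K) / (a (Fin.last (d + 1)) : K) := by
  have hsum : ∑ j : Fin (d + 1), (a j.castSucc : K) = -(a (Fin.last (d + 1)) : K) := by
    rw [Fin.sum_univ_castSucc] at hbal
    exact_mod_cast congrArg (Int.cast : ℤ → K) (eq_neg_of_add_eq_zero_left hbal)
  rw [hzs, hsum, mul_neg_one, neg_mul, neg_inj, eq_div_iff hlast, eq_comm, mul_comm]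

end Chart

/-- For balanced nonzero `a ∈ ℤ^{d+2}` (`d ≥ 2`), `G = (W, z₀/z₁)` on
the affine chart `U` of the pair of pants, and `z ∈ U`: the restriction of the complex
Fréchet derivative `DG(z)` to the direction subspace `T = {v : ∑ vᵢ = 0}` has rank at
most `1` iff `zᵢ = aᵢ / a_{d+1}` for all `2 ≤ i ≤ d`. -/
theorem statement10 (d : ℕ) (hd : 2 ≤ d) (a : Fin (d + 2) → ℤ)
    (hne : ∀ i, a i ≠ 0) (hbal : ∑ i, a i = 0)
    (G : (Fin (d + 1) → ℂ) → ℂ × ℂ)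
    (hG : G = fun z => (∏ i : Fin (d + 1), z i ^ a i.castSucc, z 0 / z 1))
    (T : Submodule ℂ (Fin (d + 1) → ℂ))
    (hT : (T : Set (Fin (d + 1) → ℂ)) = {v | ∑ i, v i = 0})
    (z : Fin (d + 1) → ℂ) (hz0 : ∀ i, z i ≠ 0) (hzs : ∑ i, z i = -1) :
    Module.rank ℂ ↥(T.map (fderiv ℂ G z).toLinearMap) ≤ 1 ↔
      ∀ i : Fin (d + 1), 2 ≤ (i : ℕ) →
        z i = (a i.castSucc : ℂ) / (a (Fin.last (d + 1)) : ℂ) := by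
  obtain rfl : T = sumZeroHyperplane ℂ (Fin (d + 1)) :=
    SetLike.coe_injective (hT.trans (Set.ext fun _ => mem_sumZeroHyperplane.symm))
  obtain ⟨k, rfl⟩ := Nat.exists_eq_add_of_le' (Nat.one_le_of_lt hd)
  rw [hG, statement10_general zero_ne_one (fun i => a i.castSucc) hz0 (by simp [hzs])]
  simp only [two_le_val_iff_ne_zero_and_ne_one, and_imp,
    mul_sum_eq_sum_mul_iff_eq_div_last hbal (Int.cast_ne_zero.2 (hne _)) hzs]
end
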